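/- Let R be a (possibly noncommutative) unital ring, P ∈ R, and S a left R-module. Then there is an isomorphism of abelian groups Ext¹_R(M_P, S) ≅ {g ∈ S : Q • g = 0 for all Q ∈ N_P} ⧸ {P • f : f ∈ S}, where M_P = R ⧸ R·P. That is, Ext¹ classifies elements of S satisfying the algebraic compatibility conditions of the inhomogeneous equation Pf = g, modulo those g for which the equation Pf = g is truly solvable in S. (Note that P • f satisfies the compatibility conditions for every f ∈ S, since Q(Pf) = (QP)f = 0 for Q ∈ N_P.) -/

import Mathlib

open CategoryTheory Opposite

/-- The subgroup `{g ∈ S | Q • g = 0 for all Q with Q * P = 0}` of elements of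
`S` satisfying the algebraic compatibility conditions of the inhomogeneous
equation `P f = g`. -/
def compatSpace (R : Type*) [Ring R] (P : R) (S : Type*) [AddCommGroup S]
    [Module R S] : AddSubgroup S where
  carrier := {g : S | ∀ Q : R, Q * P = 0 → Q • g = 0}
  add_mem' := by
    intro a b ha hb Q hQ
    rw [smul_add, ha Q hQ, hb Q hQ, add_zero]
  zero_mem' := by intro Q _; simp
  neg_mem' := by
    intro a ha Q hQ
    rw [smul_neg, ha Q hQ, neg_zero]


namespace CategoryTheory.ProjectiveResolution

open Limits

variable {C : Type*} [Category* C] [Abelian C] [EnoughProjectives C]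

/-- The chain complex obtained by prolonging a morphism `d : X₁ ⟶ X₀` by iterated projective
syzygies. -/
noncomputable def complexOfHom {X₁ X₀ : C} (d : X₁ ⟶ X₀) : ChainComplex C ℕ :=
  ChainComplex.mk' X₀ X₁ d (fun f => ⟨Projective.syzygies f, Projective.d f,
    (Category.assoc _ _ _).trans ((congrArg _ (kernel.condition f)).trans comp_zero)⟩)

lemma complexOfHom_d_one_zero {X₁ X₀ : C} (d : X₁ ⟶ X₀) : (complexOfHom d).d 1 0 = d :=
  ChainComplex.mk'_d_1_0 ..

/-- The objects of `complexOfHom d` in degrees at least two are syzygies of its differentials. -/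
noncomputable def complexOfHomXIso {X₁ X₀ : C} (d : X₁ ⟶ X₀) (n : ℕ) :
    (complexOfHom d).X (n + 2) ≅ Projective.syzygies ((complexOfHom d).d (n + 1) n) :=
  ChainComplex.mk'XIso X₀ X₁ d _ n

lemma complexOfHom_d_succ {X₁ X₀ : C} (d : X₁ ⟶ X₀) (n : ℕ) :
    (complexOfHom d).d (n + 2) (n + 1) =
      (complexOfHomXIso d n).hom ≫ Projective.d ((complexOfHom d).d (n + 1) n) :=
  ChainComplex.mk'_d X₀ X₁ d _ n

lemma complexOfHom_exactAt_succ {X₁ X₀ : C} (d : X₁ ⟶ X₀) (n : ℕ) :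
    (complexOfHom d).ExactAt (n + 1) := by
  rw [HomologicalComplex.exactAt_iff' _ (n + 2) (n + 1) n (by simp) (by simp)]
  refine (ShortComplex.exact_iff_of_iso ?_).2 (exact_d_f ((complexOfHom d).d (n + 1) n))
  refine ShortComplex.isoMk (complexOfHomXIso d n) (Iso.refl _) (Iso.refl _) ?_ ?_
  · exact (complexOfHom_d_succ d n).symm.trans (Category.comp_id _).symm
  · exact (Category.id_comp _).trans (Category.comp_id _).symm

lemma projective_complexOfHom_X {X₁ X₀ : C} [Projective X₁] [Projective X₀] (d : X₁ ⟶ X₀) (n : ℕ) :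
    Projective ((complexOfHom d).X n) := by
  obtain _ | _ | n := n
  · assumption
  · assumption
  · exact Projective.of_iso (complexOfHomXIso d n).symm (Projective.projective_over _)

/-- A projective presentation `X₁ ⟶ X₀ ⟶ Z ⟶ 0` extends to a projective resolution of `Z`. -/
noncomputable def ofPresentation (S : ShortComplex C) (hS : S.Exact) [Epi S.g]
    [Projective S.X₁] [Projective S.X₂] : ProjectiveResolution S.X₃ where
  complex := complexOfHom S.f
  projective := projective_complexOfHom_X S.f
  π := (ChainComplex.toSingle₀Equiv _ _).symm ⟨S.g, by rw [complexOfHom_d_one_zero]; exact S.zero⟩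
  quasiIso := ⟨fun n => by
    cases n
    · rw [ChainComplex.quasiIsoAt₀_iff, ShortComplex.quasiIso_iff_of_zeros']
      · refine (ShortComplex.exact_and_epi_g_iff_of_iso ?_).2 ⟨hS, inferInstance⟩
        refine ShortComplex.isoMk (Iso.refl _) (Iso.refl _) (Iso.refl _) ?_ ?_
        · exact (Category.id_comp _).trans
            ((complexOfHom_d_one_zero S.f).symm.trans (Category.comp_id _).symm)
        · refine (Category.id_comp _).trans (Eq.trans ?_ (Category.comp_id _).symm)
          exact (ChainComplex.toSingle₀Equiv_symm_apply_f_zero (C := complexOfHom S.f) S.g _).symm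
      all_goals rfl
    · rw [quasiIsoAt_iff_exactAt']
      · apply complexOfHom_exactAt_succ
      · apply ChainComplex.exactAt_succ_single_obj⟩

end CategoryTheory.ProjectiveResolution

open CategoryTheory.ProjectiveResolution

/-- A subquotient `A ⧸ B` of `G` computes the homology of a short complex of modules whose middle
term is identified with `G`, its cycles with `A` and its boundaries with `B`. -/
lemma nonempty_homology_addEquiv {k : Type*} [Ring k] (T : ShortComplex (ModuleCat k))
    {G : Type*} [AddCommGroup G] (A B : AddSubgroup G) (e : G ≃+ T.X₂)
    (hA : ∀ x, x ∈ A ↔ T.g (e x) = 0) (hB : ∀ x, x ∈ B ↔ ∃ y, T.f y = e x) :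
    Nonempty (T.homology ≃+ A ⧸ B.addSubgroupOf A) := by
  let φ : A →+ LinearMap.ker T.g.hom :=
    (e.toAddMonoidHom.comp A.subtype).codRestrict (LinearMap.ker T.g.hom)
      fun x => (hA x).1 x.2
  let ψ : A →+ LinearMap.ker T.g.hom ⧸ LinearMap.range T.moduleCatToCycles :=
    (LinearMap.range T.moduleCatToCycles).mkQ.toAddMonoidHom.comp φ
  have hψ : Function.Surjective ψ := by
    intro q
    obtain ⟨⟨x, hx⟩, rfl⟩ := Submodule.mkQ_surjective _ q
    refine ⟨⟨e.symm x, (hA _).2 (by simpa using hx)⟩, ?_⟩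
    exact congrArg (Submodule.mkQ _) (Subtype.ext (e.apply_symm_apply x))
  have hker : ψ.ker = B.addSubgroupOf A := by
    ext x
    rw [AddMonoidHom.mem_ker, AddSubgroup.mem_addSubgroupOf, hB]
    refine (Submodule.Quotient.mk_eq_zero _).trans ⟨?_, ?_⟩
    · rintro ⟨y, hy⟩
      exact ⟨y, congrArg Subtype.val hy⟩
    · rintro ⟨y, hy⟩
      exact ⟨y, Subtype.ext hy⟩
  exact ⟨T.moduleCatHomologyIso.toLinearEquiv.toAddEquiv.trans
    ((QuotientAddGroup.quotientKerEquivOfSurjective ψ hψ).symm.trans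
      (QuotientAddGroup.quotientAddEquivOfEq hker))⟩

/-- The presentation `R ⟶ R ⟶ R ⧸ R·P` by right multiplication by `P`. -/
def cyclicPresentation (R : Type u) [Ring R] (P : R) : ShortComplex (ModuleCat.{u} R) :=
  ShortComplex.moduleCatMk (LinearMap.toSpanSingleton R R P) (Submodule.span R {P}).mkQ (by
    ext; simp [Submodule.mem_span_singleton_self])

lemma cyclicPresentation_exact (R : Type u) [Ring R] (P : R) :
    (cyclicPresentation R P).Exact := by
  rw [ShortComplex.moduleCat_exact_iff_range_eq_ker]
  exact (LinearMap.range_toSpanSingleton P).trans (Submodule.ker_mkQ _).symm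

instance (R : Type u) [Ring R] (P : R) : Epi (cyclicPresentation R P).g :=
  (ModuleCat.epi_iff_surjective _).2 (Submodule.mkQ_surjective _)

instance (R : Type u) [Ring R] (P : R) : Projective (cyclicPresentation R P).X₁ :=
  inferInstanceAs (Projective (ModuleCat.of R R))

instance (R : Type u) [Ring R] (P : R) : Projective (cyclicPresentation R P).X₂ :=
  inferInstanceAs (Projective (ModuleCat.of R R))

/-- Evaluation at `1` identifies morphisms out of `R` with elements. -/
def homOfSelfAddEquiv (R : Type u) [Ring R] (S : ModuleCat.{u} R) :
    S ≃+ (ModuleCat.of R R ⟶ S) where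
  toFun g := ModuleCat.ofHom (LinearMap.toSpanSingleton R S g)
  invFun φ := φ.hom (1 : R)
  left_inv g := by simp
  right_inv φ := by ext; simp
  map_add' g h := by ext; simp

/-- `Ext¹_R(M_P, S)` (with `M_P = R ⧸ R·P`) is isomorphic, as an abelian group,
to the group of elements of `S` satisfying the algebraic compatibility
conditions of the inhomogeneous equation `P f = g`, modulo the subgroup
`{P • f : f ∈ S}` of right-hand sides `g` for which the equation is truly
solvable in `S`. -/
theorem ext_one_iso_compat_mod_solvable
    (R : Type u) [Ring R] (P : R) (S : Type u) [AddCommGroup S] [Module R S] :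
    Nonempty
      ((((Ext ℤ (ModuleCat.{u} R) 1).obj
          (op (ModuleCat.of R (R ⧸ Submodule.span R ({P} : Set R))))).obj
            (ModuleCat.of R S)) ≃+
        (compatSpace R P S ⧸
          ((DistribMulAction.toAddMonoidHom S P).range.addSubgroupOf
            (compatSpace R P S)))) := by
  let d := (cyclicPresentation R P).f
  let K := complexOfHom d
  let L := K.linearYonedaObj ℤ (ModuleCat.of R S)
  have hex := (HomologicalComplex.exactAt_iff' K 2 1 0 (by simp) (by simp)).1
    (complexOfHom_exactAt_succ d 0)
  have hd : K.d 1 0 = d := complexOfHom_d_one_zero d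
  let iso := (ofPresentation _ (cyclicPresentation_exact R P)).isoExt (R := ℤ) 1 (ModuleCat.of R S)
  let iso' := ShortComplex.homologyMapIso (L.isoSc' 0 1 2 (by simp) (by simp))
  obtain ⟨e⟩ := nonempty_homology_addEquiv (L.sc' 0 1 2) (compatSpace R P S)
    (DistribMulAction.toAddMonoidHom S P).range (homOfSelfAddEquiv R (ModuleCat.of R S))
    (fun g => by
      change _ ↔ K.d 2 1 ≫ homOfSelfAddEquiv R (ModuleCat.of R S) g = 0
      constructor
      · intro hg
        ext x
        refine hg _ ?_
        have := congr($(K.d_comp_d 2 1 0) x)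
        rw [hd] at this
        exact this
      · intro hg Q hQ
        obtain ⟨x, rfl⟩ := (ShortComplex.moduleCat_exact_iff _).1 hex Q (by
          change K.d 1 0 Q = 0
          rw [hd]
          exact hQ)
        exact congr($hg x))
    (fun g => by
      change _ ↔ ∃ y : ModuleCat.of R R ⟶ ModuleCat.of R S,
        K.d 1 0 ≫ y = homOfSelfAddEquiv R (ModuleCat.of R S) g
      rw [hd]
      constructor
      · rintro ⟨f, rfl⟩
        refine ⟨homOfSelfAddEquiv R _ f, ?_⟩
        ext
        exact smul_assoc (1 : R) P f
      · rintro ⟨y, hy⟩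
        refine ⟨y.hom (1 : R), ?_⟩
        have h : y.hom ((1 : R) • P) = (1 : R) • g := congr($hy (1 : R))
        rw [one_smul, one_smul] at h
        rw [← h]
        exact (y.hom.map_smul P (1 : R)).symm.trans (congrArg y.hom (mul_one P)))
  exact ⟨(iso ≪≫ iso').toLinearEquiv.toAddEquiv.trans e⟩
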